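/- arXiv:1312.1653 — 4 statements merged into one kernel-verified Lean document; each statement's English description precedes it below -/
import Mathlib

section
/- Let n ≥ 1, let Σ be an n×n real positive definite matrix, let k ∈ ℝ^n and σ > 0 be such that the (n+1)×(n+1) block matrix Δ := σ² [[1, kᵀ], [k, Σ]] is positive definite, and let y ∈ ℝ^n. Let 𝟙 denote the all-ones vector (in ℝ^n or ℝ^{n+1} as appropriate). For m > 0 define g_m(z) := [∫_{−m}^{m} exp(−½ ((z,y) − u𝟙)ᵀ Δ⁻¹ ((z,y) − u𝟙)) du] / [∫_ℝ ∫_{−m}^{m} exp(−½ ((z',y) − u𝟙)ᵀ Δ⁻¹ ((z',y) − u𝟙)) du dz'], where (z,y) ∈ ℝ^{n+1} is the vector with first coordinate z followed by y. Then for every z ∈ ℝ, as m → ∞, g_m(z) converges to the density at z of the one-dimensional Gaussian distribution with mean μ + kᵀ Σ⁻¹ (y − μ𝟙), where μ := (𝟙ᵀ Σ⁻¹ y)/(𝟙ᵀ Σ⁻¹ 𝟙), and variance σ² (1 − kᵀ Σ⁻¹ k + (1 − 𝟙ᵀ Σ⁻¹ k)² / (𝟙ᵀ Σ⁻¹ 𝟙)).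 -/
open Matrix MeasureTheory Real Filter

theorem integrable_exp_neg_mul_sub_sq {A : ℝ} (hA : 0 < A) (a : ℝ) :
    Integrable fun u : ℝ => Real.exp (-A * (u - a) ^ 2) :=
  (integrable_exp_neg_mul_sq hA).comp_sub_right a

theorem integral_exp_neg_mul_sub_sq (A a : ℝ) :
    ∫ u : ℝ, Real.exp (-A * (u - a) ^ 2) = √(π / A) := by
  rw [integral_sub_right_eq_self (fun u : ℝ => Real.exp (-A * u ^ 2)) a, integral_gaussian]

theorem Matrix.PosDef.dotProduct_inv_mulVec_comm {ι : Type*} [Fintype ι] [DecidableEq ι]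
    {S : Matrix ι ι ℝ} (hS : S.PosDef) (v w : ι → ℝ) :
    v ⬝ᵥ S⁻¹ *ᵥ w = w ⬝ᵥ S⁻¹ *ᵥ v := by
  have hT : S⁻¹ᵀ = S⁻¹ := by simpa using hS.isHermitian.inv.eq
  rw [dotProduct_mulVec, ← mulVec_transpose, hT, dotProduct_comm]

theorem Matrix.PosDef.mulVec_inv_mulVec {ι : Type*} [Fintype ι] [DecidableEq ι]
    {S : Matrix ι ι ℝ} (hS : S.PosDef) (w : ι → ℝ) : S *ᵥ S⁻¹ *ᵥ w = w := by
  rw [mulVec_mulVec, mul_nonsing_inv _ ((isUnit_iff_isUnit_det S).1 hS.isUnit), one_mulVec]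

theorem bordered_mulVec {ι : Type*} [Fintype ι] (S : Matrix ι ι ℝ) (k : ι → ℝ) (a : ℝ)
    (w : ι → ℝ) :
    Matrix.fromBlocks (Matrix.of fun (_ _ : Unit) => (1 : ℝ)) (Matrix.of fun _ j => k j)
        (Matrix.of fun i _ => k i) S *ᵥ Sum.elim (fun _ : Unit => a) w =
      Sum.elim (fun _ => a + k ⬝ᵥ w) (a • k + S *ᵥ w) := by
  rw [fromBlocks_mulVec]
  congr 1 <;> ext i <;> simp [mulVec, dotProduct, mul_comm]

theorem schur_complement_pos {ι : Type*} [Fintype ι] [DecidableEq ι]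
    {S : Matrix ι ι ℝ} (hS : S.PosDef) (k : ι → ℝ) {σ : ℝ} (hσ : 0 < σ)
    (hΔ : (σ ^ 2 • Matrix.fromBlocks (Matrix.of fun (_ _ : Unit) => (1 : ℝ))
      (Matrix.of fun _ j => k j) (Matrix.of fun i _ => k i) S).PosDef) :
    0 < 1 - k ⬝ᵥ S⁻¹ *ᵥ k := by
  have hne : Sum.elim (fun _ : Unit => (1 : ℝ)) (-(S⁻¹ *ᵥ k)) ≠ 0 :=
    fun h => one_ne_zero (congrFun h (Sum.inl ()))
  have h := hΔ.dotProduct_mulVec_pos hne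
  rw [smul_mulVec, bordered_mulVec, star_trivial, dotProduct_smul, sumElim_dotProduct_sumElim,
    mulVec_neg, hS.mulVec_inv_mulVec] at h
  simp only [one_smul, add_neg_cancel, dotProduct_zero, add_zero, dotProduct_neg, smul_eq_mul] at h
  have h2 : 0 < σ ^ 2 := by positivity
  simpa [dotProduct, ← sub_eq_add_neg] using pos_of_mul_pos_right h h2.le

/-- Block inversion of the quadratic form of a bordered positive definite matrix. -/
theorem bordered_inv_quadratic_form {ι : Type*} [Fintype ι] [DecidableEq ι]
    {S : Matrix ι ι ℝ} (hS : S.PosDef) (k : ι → ℝ) {σ : ℝ} (hσ : 0 < σ)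
    (hΔ : (σ ^ 2 • Matrix.fromBlocks (Matrix.of fun (_ _ : Unit) => (1 : ℝ))
      (Matrix.of fun _ j => k j) (Matrix.of fun i _ => k i) S).PosDef) (a : ℝ) (w : ι → ℝ) :
    Sum.elim (fun _ : Unit => a) w ⬝ᵥ
      (σ ^ 2 • Matrix.fromBlocks (Matrix.of fun (_ _ : Unit) => (1 : ℝ))
      (Matrix.of fun _ j => k j) (Matrix.of fun i _ => k i) S)⁻¹ *ᵥ
        Sum.elim (fun _ : Unit => a) w =
      ((a - k ⬝ᵥ S⁻¹ *ᵥ w) ^ 2 / (1 - k ⬝ᵥ S⁻¹ *ᵥ k) + w ⬝ᵥ S⁻¹ *ᵥ w) / σ ^ 2 := by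
  have hs := schur_complement_pos hS k hσ hΔ
  set s := 1 - k ⬝ᵥ S⁻¹ *ᵥ k with hsdef
  set e := (a - k ⬝ᵥ S⁻¹ *ᵥ w) / (σ ^ 2 * s) with he
  have hσ2 : σ ^ 2 ≠ 0 := by positivity
  have hx : (σ ^ 2 • Matrix.fromBlocks (Matrix.of fun (_ _ : Unit) => (1 : ℝ))
      (Matrix.of fun _ j => k j) (Matrix.of fun i _ => k i) S) *ᵥ
        Sum.elim (fun _ : Unit => e) ((σ ^ 2)⁻¹ • S⁻¹ *ᵥ w - e • S⁻¹ *ᵥ k) =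
      Sum.elim (fun _ : Unit => a) w := by
    rw [smul_mulVec, bordered_mulVec, mulVec_sub, mulVec_smul, mulVec_smul,
      hS.mulVec_inv_mulVec, hS.mulVec_inv_mulVec]
    ext i
    rcases i with i | i
    · simp only [dotProduct_sub, dotProduct_smul, smul_eq_mul, Pi.smul_apply, Sum.elim_inl]
      have hk : k ⬝ᵥ S⁻¹ *ᵥ k = 1 - s := by rw [hsdef]; ring
      rw [hk, he]
      field_simp
      ring
    · simp [hσ2]
  have hinv : ∀ v, (σ ^ 2 • Matrix.fromBlocks (Matrix.of fun (_ _ : Unit) => (1 : ℝ))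
      (Matrix.of fun _ j => k j) (Matrix.of fun i _ => k i) S)⁻¹ *ᵥ
      ((σ ^ 2 • Matrix.fromBlocks (Matrix.of fun (_ _ : Unit) => (1 : ℝ))
      (Matrix.of fun _ j => k j) (Matrix.of fun i _ => k i) S) *ᵥ v) = v := fun v => by
    rw [mulVec_mulVec, nonsing_inv_mul _ ((isUnit_iff_isUnit_det _).1 hΔ.isUnit), one_mulVec]
  nth_rewrite 2 [← hx]
  rw [hinv, sumElim_dotProduct_sumElim, dotProduct_sub, dotProduct_smul, dotProduct_smul,
    hS.dotProduct_inv_mulVec_comm w k]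
  have hu : (fun _ : Unit => a) ⬝ᵥ (fun _ => e) = a * e := by simp [dotProduct]
  rw [hu, he, smul_eq_mul, smul_eq_mul]
  field_simp
  ring

/-- A jointly Gaussian kernel in `(z, u)`, integrated over `u ∈ [-m, m]` and normalised in `z`,
tends to the normalised marginal Gaussian density as `m → ∞`. -/
theorem tendsto_truncated_gaussian_mixture {s r v : ℝ} (hs : 0 < s) (hr : 0 < r) (hv : 0 < v)
    (c d μ C z : ℝ) :
    Tendsto (fun m : ℝ =>
      (∫ u in (-m)..m, Real.exp (-(1 / 2) *
        (((z - c - u * d) ^ 2 / s + r * (u - μ) ^ 2 + C) / v))) /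
      ∫ z' : ℝ, ∫ u in (-m)..m, Real.exp (-(1 / 2) *
        (((z' - c - u * d) ^ 2 / s + r * (u - μ) ^ 2 + C) / v))) atTop
      (nhds ((2 * π * (v * (s + d ^ 2 / r))) ^ (-(1 : ℝ) / 2) *
        Real.exp (-(z - c - μ * d) ^ 2 / (2 * (v * (s + d ^ 2 / r)))))) := by
  set R := r + d ^ 2 / s with hR
  have hRpos : 0 < R := by positivity
  have hnum (z u : ℝ) : Real.exp (-(1 / 2) *
        (((z - c - u * d) ^ 2 / s + r * (u - μ) ^ 2 + C) / v)) =
      Real.exp (-C / (2 * v)) * Real.exp (-(z - c - μ * d) ^ 2 / (2 * (v * (s + d ^ 2 / r)))) *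
        Real.exp (-(R / (2 * v)) * (u - (μ + (z - c - μ * d) * d / s / R)) ^ 2) := by
    rw [← Real.exp_add, ← Real.exp_add]
    congr 1
    have : s * r + d ^ 2 ≠ 0 := by positivity
    have : r * s + d ^ 2 ≠ 0 := by positivity
    rw [hR]
    field_simp
    ring
  have hden (z u : ℝ) : Real.exp (-(1 / 2) *
        (((z - c - u * d) ^ 2 / s + r * (u - μ) ^ 2 + C) / v)) =
      Real.exp (-C / (2 * v)) * Real.exp (-(r / (2 * v)) * (u - μ) ^ 2) *
        Real.exp (-(1 / (2 * v * s)) * (z - (c + u * d)) ^ 2) := by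
    rw [← Real.exp_add, ← Real.exp_add]
    congr 1
    field_simp
    ring
  have hNum : Tendsto (fun m : ℝ => ∫ u in (-m)..m, Real.exp (-(1 / 2) *
        (((z - c - u * d) ^ 2 / s + r * (u - μ) ^ 2 + C) / v))) atTop
      (nhds (Real.exp (-C / (2 * v)) *
        Real.exp (-(z - c - μ * d) ^ 2 / (2 * (v * (s + d ^ 2 / r)))) * √(π / (R / (2 * v))))) := by
    simp_rw [hnum]
    rw [← integral_exp_neg_mul_sub_sq _ (μ + (z - c - μ * d) * d / s / R), ← integral_const_mul]
    exact intervalIntegral_tendsto_integral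
      ((integrable_exp_neg_mul_sub_sq (by positivity) _).const_mul _)
      tendsto_neg_atTop_atBot tendsto_id
  have hslice (u : ℝ) : ∫ z : ℝ, Real.exp (-(1 / 2) *
        (((z - c - u * d) ^ 2 / s + r * (u - μ) ^ 2 + C) / v)) =
      Real.exp (-C / (2 * v)) * √(π / (1 / (2 * v * s))) *
        Real.exp (-(r / (2 * v)) * (u - μ) ^ 2) := by
    simp_rw [hden]
    rw [integral_const_mul, integral_exp_neg_mul_sub_sq]
    ring
  have hsliceInt : Integrable fun u : ℝ => Real.exp (-C / (2 * v)) * √(π / (1 / (2 * v * s))) *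
        Real.exp (-(r / (2 * v)) * (u - μ) ^ 2) :=
    (integrable_exp_neg_mul_sub_sq (by positivity) _).const_mul _
  have hprod : Integrable (Function.uncurry fun z u : ℝ => Real.exp (-(1 / 2) *
        (((z - c - u * d) ^ 2 / s + r * (u - μ) ^ 2 + C) / v))) (volume.prod volume) := by
    rw [integrable_prod_iff' (Continuous.aestronglyMeasurable (by fun_prop))]
    refine ⟨.of_forall fun u => ?_, ?_⟩
    · simp only [Function.uncurry_apply_pair, hden]
      exact (integrable_exp_neg_mul_sub_sq (by positivity) _).const_mul _
    · simpa only [Function.uncurry_apply_pair, Real.norm_eq_abs, Real.abs_exp, hslice]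
        using hsliceInt
  have hDen : Tendsto (fun m : ℝ => ∫ z' : ℝ, ∫ u in (-m)..m, Real.exp (-(1 / 2) *
        (((z' - c - u * d) ^ 2 / s + r * (u - μ) ^ 2 + C) / v))) atTop
      (nhds (Real.exp (-C / (2 * v)) * √(π / (1 / (2 * v * s))) * √(π / (r / (2 * v))))) := by
    rw [← integral_exp_neg_mul_sub_sq (r / (2 * v)) μ, ← integral_const_mul]
    refine (intervalIntegral_tendsto_integral hsliceInt
      tendsto_neg_atTop_atBot tendsto_id).congr' ?_
    filter_upwards [eventually_ge_atTop 0] with m hm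
    have hle : -m ≤ m := by linarith
    simp only [id, intervalIntegral.integral_of_le hle]
    rw [integral_integral_swap (hprod.mono_measure
      (Measure.prod_mono le_rfl Measure.restrict_le_self))]
    simp only [hslice]
  have hdenpos : 0 < Real.exp (-C / (2 * v)) * √(π / (1 / (2 * v * s))) * √(π / (r / (2 * v))) := by
    positivity
  have hroot : √(2 * π * (v * (s + d ^ 2 / r))) * √(π / (R / (2 * v))) =
      √(π / (1 / (2 * v * s))) * √(π / (r / (2 * v))) := by
    rw [← Real.sqrt_mul (by positivity), ← Real.sqrt_mul (by positivity)]
    congr 1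
    rw [hR]
    field_simp
  have hpow : (2 * π * (v * (s + d ^ 2 / r))) ^ (-(1 : ℝ) / 2) =
      (√(2 * π * (v * (s + d ^ 2 / r))))⁻¹ := by
    rw [neg_div, Real.rpow_neg (by positivity), ← Real.sqrt_eq_rpow]
  have h2 : 0 < √(π / (R / (2 * v))) := by positivity
  have hlim := hNum.div hDen hdenpos.ne'
  rw [mul_assoc _ (√(π / (1 / _))), ← hroot, mul_assoc,
    mul_div_mul_left _ _ (Real.exp_pos _).ne', mul_div_mul_right _ _ h2.ne'] at hlim
  rw [hpow, mul_comm, ← div_eq_mul_inv]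
  exact hlim

/-- Theorem 2 of the paper (univariate form): for the prior field `Y_x = U + W_x` with `U`
uniform on `[−m, m]`, the conditional density `g_m(z)` of `Y_x` given the `n` observations `y`
converges, as `m → ∞`, to the Gaussian density with mean `μ + kᵀ Σ⁻¹ (y − μ𝟙)`, where
`μ = (𝟙ᵀ Σ⁻¹ y)/(𝟙ᵀ Σ⁻¹ 𝟙)`, and variance
`σ² (1 − kᵀ Σ⁻¹ k + (1 − 𝟙ᵀ Σ⁻¹ k)²/(𝟙ᵀ Σ⁻¹ 𝟙))`. -/
theorem gaussian_mixture_random_mean_posterior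
    (n : ℕ) (hn : 1 ≤ n)
    (S : Matrix (Fin n) (Fin n) ℝ) (hS : S.PosDef)
    (k : Fin n → ℝ) (σ : ℝ) (hσ : 0 < σ)
    (Δ : Matrix (Unit ⊕ Fin n) (Unit ⊕ Fin n) ℝ)
    (hΔdef : Δ = σ ^ 2 •
      Matrix.fromBlocks (Matrix.of fun _ _ => (1 : ℝ)) (Matrix.of fun _ j => k j)
        (Matrix.of fun i _ => k i) S)
    (hΔ : Δ.PosDef)
    (y : Fin n → ℝ)
    (onen : Fin n → ℝ) (honen : onen = fun _ => (1 : ℝ))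
    (one1 : Unit ⊕ Fin n → ℝ) (hone1 : one1 = fun _ => (1 : ℝ))
    (μ : ℝ) (hμ : μ = (onen ⬝ᵥ S⁻¹ *ᵥ y) / (onen ⬝ᵥ S⁻¹ *ᵥ onen))
    (g : ℝ → ℝ → ℝ)
    (hg : ∀ m > (0 : ℝ), ∀ z : ℝ, g m z =
      (∫ u in (-m)..m,
          Real.exp (-(1 / 2) *
            ((Sum.elim (fun _ => z) y - u • one1) ⬝ᵥ
              Δ⁻¹ *ᵥ (Sum.elim (fun _ => z) y - u • one1)))) /
        (∫ z' : ℝ, ∫ u in (-m)..m,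
          Real.exp (-(1 / 2) *
            ((Sum.elim (fun _ => z') y - u • one1) ⬝ᵥ
              Δ⁻¹ *ᵥ (Sum.elim (fun _ => z') y - u • one1))))) :
    ∀ z : ℝ,
      Tendsto (fun m : ℝ => g m z) atTop
        (nhds
          ((2 * π * (σ ^ 2 * (1 - k ⬝ᵥ S⁻¹ *ᵥ k +
              (1 - onen ⬝ᵥ S⁻¹ *ᵥ k) ^ 2 / (onen ⬝ᵥ S⁻¹ *ᵥ onen)))) ^ (-(1 : ℝ) / 2) *
            Real.exp (-(z - (μ + k ⬝ᵥ S⁻¹ *ᵥ (y - μ • onen))) ^ 2 /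
              (2 * (σ ^ 2 * (1 - k ⬝ᵥ S⁻¹ *ᵥ k +
                (1 - onen ⬝ᵥ S⁻¹ *ᵥ k) ^ 2 / (onen ⬝ᵥ S⁻¹ *ᵥ onen))))))) := by
  subst hΔdef honen hone1
  intro z
  have hone : (fun _ : Fin n => (1 : ℝ)) ≠ 0 :=
    fun h => one_ne_zero (congrFun h ⟨0, hn⟩)
  set o : Fin n → ℝ := fun _ => 1 with ho
  have hr : 0 < o ⬝ᵥ S⁻¹ *ᵥ o := by
    simpa using hS.inv.dotProduct_mulVec_pos hone
  have hs := schur_complement_pos hS k hσ hΔ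
  have hquad (z u : ℝ) : (Sum.elim (fun _ : Unit => z) y - u • fun _ => (1 : ℝ)) ⬝ᵥ
      (σ ^ 2 • Matrix.fromBlocks (Matrix.of fun (_ _ : Unit) => (1 : ℝ))
        (Matrix.of fun _ j => k j) (Matrix.of fun i _ => k i) S)⁻¹ *ᵥ
          (Sum.elim (fun _ : Unit => z) y - u • fun _ => (1 : ℝ)) =
      ((z - k ⬝ᵥ S⁻¹ *ᵥ y - u * (1 - o ⬝ᵥ S⁻¹ *ᵥ k)) ^ 2 / (1 - k ⬝ᵥ S⁻¹ *ᵥ k) +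
        (o ⬝ᵥ S⁻¹ *ᵥ o) * (u - μ) ^ 2 +
        (y ⬝ᵥ S⁻¹ *ᵥ y - (o ⬝ᵥ S⁻¹ *ᵥ y) ^ 2 / (o ⬝ᵥ S⁻¹ *ᵥ o))) / σ ^ 2 := by
    have hvec : (Sum.elim (fun _ : Unit => z) y - u • fun _ => (1 : ℝ)) =
        Sum.elim (fun _ : Unit => z - u) (y - u • o) := by
      ext i
      rcases i with i | i <;> simp [ho]
    rw [hvec, bordered_inv_quadratic_form hS k hσ hΔ]
    simp only [mulVec_sub, mulVec_smul, dotProduct_sub, dotProduct_smul, sub_dotProduct,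
      smul_dotProduct, smul_eq_mul, hS.dotProduct_inv_mulVec_comm k o,
      hS.dotProduct_inv_mulVec_comm y o, hμ]
    field_simp
    ring
  have hlim := tendsto_truncated_gaussian_mixture hs hr (sq_pos_of_pos hσ) (k ⬝ᵥ S⁻¹ *ᵥ y)
    (1 - o ⬝ᵥ S⁻¹ *ᵥ k) μ (y ⬝ᵥ S⁻¹ *ᵥ y - (o ⬝ᵥ S⁻¹ *ᵥ y) ^ 2 / (o ⬝ᵥ S⁻¹ *ᵥ o)) z
  have hmean : z - (μ + k ⬝ᵥ S⁻¹ *ᵥ (y - μ • o)) =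
      z - k ⬝ᵥ S⁻¹ *ᵥ y - μ * (1 - o ⬝ᵥ S⁻¹ *ᵥ k) := by
    simp only [mulVec_sub, mulVec_smul, dotProduct_sub, dotProduct_smul, smul_eq_mul,
      hS.dotProduct_inv_mulVec_comm k o]
    ring
  rw [hmean]
  refine hlim.congr' ?_
  filter_upwards [eventually_gt_atTop 0] with m hm
  rw [hg m hm z]
  simp only [hquad]
end

section
/- Let n ≥ 3, let Σ be an n×n real positive definite matrix, let k ∈ ℝ^n be such that the (n+1)×(n+1) block matrix Δ := [[1, kᵀ], [k, Σ]] is positive definite, and let y ∈ ℝ^n not be a scalar multiple of the all-ones vector 𝟙. For m > 0 and 0 < ε < 1 define g_{m,ε}(z) := [∫_{−m}^{m} ∫_{ε}^{1/ε} v^{−(n+1)} exp(−(1/(2v²)) ((z,y) − u𝟙)ᵀ Δ⁻¹ ((z,y) − u𝟙)) dv du] / [∫_ℝ ∫_{−m}^{m} ∫_{ε}^{1/ε} v^{−(n+1)} exp(−(1/(2v²)) ((z',y) − u𝟙)ᵀ Δ⁻¹ ((z',y) − u𝟙)) dv du dz']. Then for every z ∈ ℝ and all sequences m_j → ∞ and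 ε_j → 0⁺, g_{m_j, ε_j}(z) converges to the density at z of the univariate Student distribution with ν = n − 2 degrees of freedom, location parameter μ + kᵀ Σ⁻¹ (y − μ𝟙), where μ := (𝟙ᵀ Σ⁻¹ y)/(𝟙ᵀ Σ⁻¹ 𝟙), and scale parameter s := sqrt( (1/(n−2)) ((y − μ𝟙)ᵀ Σ⁻¹ y) (1 − kᵀ Σ⁻¹ k + (1 − 𝟙ᵀ Σ⁻¹ k)² / (𝟙ᵀ Σ⁻¹ 𝟙)) ). -/
open Matrix MeasureTheory Real Filter

lemma integral_one_add_sq_rpow {r : ℝ} (hr : 1 < r) :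
    ∫ x : ℝ, (1 + x ^ 2) ^ (-r / 2) = √π * Gamma ((r - 1) / 2) / Gamma (r / 2) := by
  have hint : Integrable (fun x : ℝ => (1 + x ^ 2) ^ (-r / 2)) := by
    simpa using integrable_rpow_neg_one_add_norm_sq (E := ℝ) (μ := volume) (r := r) (by simpa)
  have hinner (x : ℝ) : ∫ t in Set.Ioi (0 : ℝ), t ^ (r / 2 - 1) * exp (-((1 + x ^ 2) * t)) =
      (1 + x ^ 2) ^ (-r / 2) * Gamma (r / 2) := by
    rw [Real.integral_rpow_mul_exp_neg_mul_Ioi (by linarith) (by positivity), one_div,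
      Real.inv_rpow (by positivity), ← Real.rpow_neg (by positivity), neg_div]
  have houter (t : ℝ) (ht : t ∈ Set.Ioi (0 : ℝ)) :
      ∫ x : ℝ, t ^ (r / 2 - 1) * exp (-((1 + x ^ 2) * t)) =
        √π * (t ^ ((r - 1) / 2 - 1) * exp (-(1 * t))) := by
    have ht0 : (0 : ℝ) < t := ht
    have h (x : ℝ) : t ^ (r / 2 - 1) * exp (-((1 + x ^ 2) * t)) =
        t ^ (r / 2 - 1) * exp (-t) * exp (-t * x ^ 2) := by
      rw [mul_assoc, ← Real.exp_add]; ring_nf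
    simp_rw [h]
    rw [integral_const_mul, integral_gaussian, Real.sqrt_div' _ ht0.le, Real.sqrt_eq_rpow t,
      show (r - 1) / 2 - 1 = (r / 2 - 1) - 1 / 2 by ring, Real.rpow_sub ht0 (r / 2 - 1), one_mul]
    ring
  have hprod : Integrable
      (Function.uncurry fun x t : ℝ => t ^ (r / 2 - 1) * exp (-((1 + x ^ 2) * t)))
      (volume.prod (volume.restrict (Set.Ioi 0))) := by
    rw [integrable_prod_iff (Measurable.aestronglyMeasurable (by fun_prop))]
    refine ⟨Eventually.of_forall fun x => ?_, ?_⟩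
    · have := integrableOn_rpow_mul_exp_neg_mul_rpow (s := r / 2 - 1) (p := 1) (b := 1 + x ^ 2)
        (by linarith) one_pos (by positivity)
      simpa [IntegrableOn, Function.uncurry, neg_mul, -neg_add_rev] using this
    · refine (hint.mul_const (Gamma (r / 2))).congr (Eventually.of_forall fun x => ?_)
      simp only [Function.uncurry]
      rw [← hinner x]
      refine setIntegral_congr_fun measurableSet_Ioi fun t ht => ?_
      have ht0 : (0 : ℝ) < t := ht
      exact (Real.norm_of_nonneg (by positivity)).symm
  have hswap := integral_integral_swap hprod
  simp_rw [hinner] at hswap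
  rw [integral_mul_const, setIntegral_congr_fun measurableSet_Ioi houter, integral_const_mul,
    Real.integral_rpow_mul_exp_neg_mul_Ioi (by linarith) one_pos] at hswap
  rw [eq_div_iff (Real.Gamma_pos_of_pos (by linarith)).ne', hswap]
  simp

lemma integral_mul_sub_sq_add_rpow {r A B : ℝ} (hr : 1 < r) (hA : 0 < A) (hB : 0 < B) (c : ℝ) :
    Integrable (fun x : ℝ => (A * (x - c) ^ 2 + B) ^ (-r / 2)) ∧
    ∫ x : ℝ, (A * (x - c) ^ 2 + B) ^ (-r / 2) =
      √(π / A) * Gamma ((r - 1) / 2) / Gamma (r / 2) * B ^ (-(r - 1) / 2) := by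
  have hint : Integrable (fun x : ℝ => (1 + x ^ 2) ^ (-r / 2)) := by
    simpa using integrable_rpow_neg_one_add_norm_sq (E := ℝ) (μ := volume) (r := r) (by simpa)
  have hAB : 0 < √(A / B) := Real.sqrt_pos.2 (by positivity)
  have h (x : ℝ) : (A * (x - c) ^ 2 + B) ^ (-r / 2) =
      B ^ (-r / 2) * (1 + (√(A / B) * (x - c)) ^ 2) ^ (-r / 2) := by
    rw [← Real.mul_rpow hB.le (by positivity), mul_pow, Real.sq_sqrt (by positivity)]
    congr 1
    field_simp
    ring
  simp_rw [h]
  constructor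
  · exact ((hint.comp_mul_left' hAB.ne').comp_sub_right c).const_mul _
  · rw [integral_const_mul, integral_sub_right_eq_self
      (fun x : ℝ => (1 + (√(A / B) * x) ^ 2) ^ (-r / 2)),
      Measure.integral_comp_mul_left (fun x : ℝ => (1 + x ^ 2) ^ (-r / 2)),
      integral_one_add_sq_rpow hr, abs_of_pos (inv_pos.2 hAB), smul_eq_mul,
      show -(r - 1) / 2 = -r / 2 + 1 / 2 by ring, Real.rpow_add hB, ← Real.sqrt_eq_rpow,
      Real.sqrt_div' _ hA.le, Real.sqrt_div' _ hB.le]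
    have := Real.sqrt_pos.2 hA
    have := Real.sqrt_pos.2 hB
    field_simp

lemma integral_rpow_mul_exp_neg_div_sq {r q : ℝ} (hr : 0 < r) (hq : 0 < q) :
    IntegrableOn (fun v : ℝ => v ^ (-(r + 1)) * exp (-(1 / (2 * v ^ 2)) * q)) (Set.Ioi 0) ∧
    ∫ v in Set.Ioi (0 : ℝ), v ^ (-(r + 1)) * exp (-(1 / (2 * v ^ 2)) * q) =
      1 / 2 * 2 ^ (r / 2) * Gamma (r / 2) * q ^ (-r / 2) := by
  let f : ℝ → ℝ := fun t => 1 / 2 * (t ^ (r / 2 - 1) * exp (-(q / 2 * t)))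
  have hf : IntegrableOn f (Set.Ioi 0) := by
    have := integrableOn_rpow_mul_exp_neg_mul_rpow (s := r / 2 - 1) (p := 1) (b := q / 2)
        (by linarith) one_pos (by positivity)
    exact Integrable.const_mul (by simpa [IntegrableOn, neg_mul] using this) _
  have h : Set.EqOn (fun v : ℝ => (|(-2 : ℝ)| * v ^ ((-2 : ℝ) - 1)) • f (v ^ (-2 : ℝ)))
      (fun v : ℝ => v ^ (-(r + 1)) * exp (-(1 / (2 * v ^ 2)) * q)) (Set.Ioi 0) := by
    intro v hv
    have hv0 : (0 : ℝ) < v := hv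
    simp only [f, smul_eq_mul, abs_neg, Nat.abs_ofNat]
    rw [← Real.rpow_mul hv0.le, show -(r + 1) = (-2 - 1) + -2 * (r / 2 - 1) by ring,
      Real.rpow_add hv0, Real.rpow_neg hv0.le 2, Real.rpow_two,
      show -(q / 2 * (v ^ 2)⁻¹) = -(1 / (2 * v ^ 2)) * q by field_simp]
    ring
  refine ⟨(((integrableOn_Ioi_comp_rpow_iff f (p := -2) (by norm_num)).2 hf).congr_fun h
    measurableSet_Ioi), ?_⟩
  rw [← setIntegral_congr_fun measurableSet_Ioi h, integral_comp_rpow_Ioi f (by norm_num),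
    integral_const_mul, Real.integral_rpow_mul_exp_neg_mul_Ioi (by positivity) (by positivity),
    one_div_div, Real.div_rpow two_pos.le hq.le, neg_div, Real.rpow_neg hq.le]
  ring

lemma tendsto_setIntegral_of_exhaustion {α : Type*} [MeasurableSpace α] {μ : Measure α}
    {F : ℕ → α → ℝ} {f : α → ℝ} {s : ℕ → Set α} (hs : ∀ j, MeasurableSet (s j))
    (hsμ : ∀ᵐ x ∂μ, ∀ᶠ j in atTop, x ∈ s j)
    (hFm : ∀ j, AEStronglyMeasurable (F j) μ) (hf : Integrable f μ)
    (hF0 : ∀ j, ∀ᵐ x ∂μ, 0 ≤ F j x) (hFf : ∀ j, ∀ᵐ x ∂μ, F j x ≤ f x)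
    (hlim : ∀ᵐ x ∂μ, Tendsto (fun j => F j x) atTop (nhds (f x))) :
    Tendsto (fun j => ∫ x in s j, F j x ∂μ) atTop (nhds (∫ x, f x ∂μ)) ∧
      ∀ j, 0 ≤ ∫ x in s j, F j x ∂μ ∧ ∫ x in s j, F j x ∂μ ≤ ∫ x, f x ∂μ := by
  simp_rw [← integral_indicator (hs _)]
  have h0 (j : ℕ) : ∀ᵐ x ∂μ, 0 ≤ (s j).indicator (F j) x := by
    filter_upwards [hF0 j] with x hx using Set.indicator_apply_nonneg fun _ => hx
  have hle (j : ℕ) : ∀ᵐ x ∂μ, (s j).indicator (F j) x ≤ f x := by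
    filter_upwards [hF0 j, hFf j] with x hx hx'
    exact Set.indicator_apply_le' (fun _ => hx') fun _ => hx.trans hx'
  refine ⟨tendsto_integral_of_dominated_convergence f (fun j => (hFm j).indicator (hs j)) hf
    (fun j => ?_) ?_, fun j => ⟨integral_nonneg_of_ae (h0 j), ?_⟩⟩
  · filter_upwards [h0 j, hle j] with x hx hx' using by rwa [Real.norm_of_nonneg hx]
  · filter_upwards [hsμ, hlim] with x hx hx'
    refine hx'.congr' ?_
    filter_upwards [hx] with j hj using (Set.indicator_of_mem hj _).symm
  · exact integral_mono_of_nonneg (h0 j) hf (hle j)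

lemma tendsto_gaussian_mixture_posterior {r A D b l : ℝ} {c : ℝ → ℝ} {q : ℝ → ℝ → ℝ}
    (hr : 2 < r) (hA : 0 < A) (hD : 0 < D) (hb : 0 < b)
    (hqm : Measurable (Function.uncurry q))
    (hq : ∀ z u, q z u = A * (u - c z) ^ 2 + (D⁻¹ * (z - l) ^ 2 + b))
    {m ε : ℕ → ℝ} (hm0 : ∀ j, 0 < m j) (hε0 : ∀ j, 0 < ε j ∧ ε j < 1)
    (hm : Tendsto m atTop atTop) (hε : Tendsto ε atTop (nhdsWithin 0 (Set.Ioi 0))) (z : ℝ) :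
    Tendsto (fun j =>
      (∫ u in (-m j)..m j, ∫ v in ε j..(1 / ε j),
        v ^ (-(r + 1)) * exp (-(1 / (2 * v ^ 2)) * q z u)) /
      (∫ z' : ℝ, ∫ u in (-m j)..m j, ∫ v in ε j..(1 / ε j),
        v ^ (-(r + 1)) * exp (-(1 / (2 * v ^ 2)) * q z' u))) atTop
      (nhds (Gamma ((r - 1) / 2) / (Gamma ((r - 2) / 2) * √(π * (b * D))) *
        (1 + (z - l) ^ 2 / (b * D)) ^ (-(r - 1) / 2))) := by
  have hε1 (j : ℕ) : ε j ≤ 1 / ε j :=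
    (hε0 j).2.le.trans ((one_le_div (hε0 j).1).2 (hε0 j).2.le)
  have hBpos (z : ℝ) : 0 < D⁻¹ * (z - l) ^ 2 + b := by positivity
  have hqpos (z u : ℝ) : 0 < q z u := by rw [hq]; have := hBpos z; positivity
  have hεIoc (j : ℕ) (f : ℝ → ℝ) :
      ∫ v in ε j..(1 / ε j), f v = ∫ v in Set.Ioc (ε j) (1 / ε j), f v :=
    intervalIntegral.integral_of_le (hε1 j)
  have hmIoc (j : ℕ) (f : ℝ → ℝ) :
      ∫ u in (-m j)..m j, f u = ∫ u in Set.Ioc (-m j) (m j), f u :=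
    intervalIntegral.integral_of_le (neg_lt_self (hm0 j)).le
  simp_rw [hεIoc, hmIoc]
  set f : ℝ → ℝ → ℝ → ℝ := fun z u v => v ^ (-(r + 1)) * exp (-(1 / (2 * v ^ 2)) * q z u) with hf
  have hfm : Measurable fun p : (ℝ × ℝ) × ℝ => f p.1.1 p.1.2 p.2 := by
    have : Measurable fun p : (ℝ × ℝ) × ℝ => q p.1.1 p.1.2 := hqm.comp measurable_fst
    fun_prop
  have hIm (j : ℕ) : Measurable
      fun p : ℝ × ℝ => ∫ v in Set.Ioc (ε j) (1 / ε j), f p.1 p.2 v :=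
    (StronglyMeasurable.integral_prod_right
      (f := fun (p : ℝ × ℝ) v => f p.1 p.2 v) hfm.stronglyMeasurable).measurable
  have hNm (j : ℕ) : Measurable fun z : ℝ =>
      ∫ u in Set.Ioc (-m j) (m j), ∫ v in Set.Ioc (ε j) (1 / ε j), f z u v :=
    (StronglyMeasurable.integral_prod_right
      (f := fun z u : ℝ => ∫ v in Set.Ioc (ε j) (1 / ε j), f z u v)
      (hIm j).stronglyMeasurable).measurable
  let K₁ : ℝ := 1 / 2 * 2 ^ (r / 2) * Gamma (r / 2)
  set K₂ : ℝ := √(π / A) * Gamma ((r - 1) / 2) / Gamma (r / 2) with hK₂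
  have hΓ : 0 < Gamma (r / 2) := Real.Gamma_pos_of_pos (by linarith)
  have hΓ1 : 0 < Gamma ((r - 1) / 2) := Real.Gamma_pos_of_pos (by linarith)
  have hΓ2 : 0 < Gamma ((r - 2) / 2) := Real.Gamma_pos_of_pos (by linarith)
  have hK₁pos : 0 < K₁ := by positivity
  have hK₂pos : 0 < K₂ := by
    have := pi_pos
    positivity
  have hvar (z u : ℝ) := tendsto_setIntegral_of_exhaustion
    (μ := volume.restrict (Set.Ioi (0 : ℝ))) (F := fun _ => f z u) (f := f z u)
    (s := fun j => Set.Ioc (ε j) (1 / ε j)) (fun _ => measurableSet_Ioc)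
    (by
      filter_upwards [ae_restrict_mem measurableSet_Ioi] with v hv
      have hv0 : (0 : ℝ) < v := hv
      have h1 : Tendsto ε atTop (nhds 0) := hε.mono_right nhdsWithin_le_nhds
      filter_upwards [h1.eventually_lt_const hv0, h1.eventually_lt_const (inv_pos.2 hv0)]
        with j hj hj'
      refine ⟨hj, ?_⟩
      rw [one_div]
      exact (le_inv_comm₀ (hε0 j).1 hv0).1 hj'.le)
    (fun _ => (hfm.comp (measurable_prodMk_left (x := (z, u)))).aestronglyMeasurable)
    (integral_rpow_mul_exp_neg_div_sq (by linarith) (hqpos z u)).1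
    (fun _ => by
      filter_upwards [ae_restrict_mem measurableSet_Ioi] with v hv
      have hv0 : (0 : ℝ) < v := hv
      simp only [hf]
      positivity)
    (fun _ => Eventually.of_forall fun _ => le_rfl)
    (Eventually.of_forall fun _ => tendsto_const_nhds)
  have hres (j : ℕ) : (volume.restrict (Set.Ioi (0 : ℝ))).restrict (Set.Ioc (ε j) (1 / ε j)) =
      volume.restrict (Set.Ioc (ε j) (1 / ε j)) :=
    Measure.restrict_restrict_of_subset fun v hv => (hε0 j).1.trans hv.1
  have hI (z u : ℝ) : ∫ v in Set.Ioi (0 : ℝ), f z u v = K₁ * q z u ^ (-r / 2) :=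
    (integral_rpow_mul_exp_neg_div_sq (by linarith) (hqpos z u)).2
  simp_rw [hres, hI] at hvar
  have hmean (z : ℝ) := integral_mul_sub_sq_add_rpow (by linarith : 1 < r) hA (hBpos z) (c z)
  simp_rw [← hq, ← hK₂] at hmean
  have hu (z : ℝ) := tendsto_setIntegral_of_exhaustion (μ := volume)
    (F := fun j u => ∫ v in Set.Ioc (ε j) (1 / ε j), f z u v)
    (f := fun u => K₁ * q z u ^ (-r / 2))
    (s := fun j => Set.Ioc (-m j) (m j)) (fun _ => measurableSet_Ioc)
    (Eventually.of_forall fun u => by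
      filter_upwards [hm.eventually_gt_atTop |u|] with j hj
      exact ⟨(abs_lt.1 hj).1, (abs_lt.1 hj).2.le⟩)
    (fun j => ((hIm j).comp measurable_prodMk_left).aestronglyMeasurable)
    ((hmean z).1.const_mul _)
    (fun j => Eventually.of_forall fun u => ((hvar z u).2 j).1)
    (fun j => Eventually.of_forall fun u => ((hvar z u).2 j).2)
    (Eventually.of_forall fun u => (hvar z u).1)
  simp_rw [integral_const_mul, fun z => (hmean z).2] at hu
  have hpost := integral_mul_sub_sq_add_rpow (by linarith : 1 < r - 1) (inv_pos.2 hD) hb l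
  have hz := tendsto_setIntegral_of_exhaustion (μ := volume)
    (F := fun j z => ∫ u in Set.Ioc (-m j) (m j), ∫ v in Set.Ioc (ε j) (1 / ε j), f z u v)
    (f := fun z => K₁ * (K₂ * (D⁻¹ * (z - l) ^ 2 + b) ^ (-(r - 1) / 2)))
    (s := fun _ => Set.univ) (fun _ => MeasurableSet.univ) (by simp)
    (fun j => (hNm j).aestronglyMeasurable)
    ((hpost.1.const_mul _).const_mul _)
    (fun j => Eventually.of_forall fun z => ((hu z).2 j).1)
    (fun j => Eventually.of_forall fun z => ((hu z).2 j).2)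
    (Eventually.of_forall fun z => (hu z).1)
  simp_rw [integral_const_mul, hpost.2, setIntegral_univ] at hz
  have hb' : 0 < b ^ (-(r - 1) / 2) := by positivity
  have hlim := (hu z).1.div hz.1 (by
    have := pi_pos
    have : 0 < Gamma ((r - 1 - 1) / 2) := Real.Gamma_pos_of_pos (by linarith)
    positivity)
  convert! hlim using 2
  have hsplit : D⁻¹ * (z - l) ^ 2 + b = b * (1 + (z - l) ^ 2 / (b * D)) := by
    field_simp
    ring
  have hbD : √(π * (b * D)) = √(π / D⁻¹) * b ^ (1 / 2 : ℝ) := by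
    rw [← Real.sqrt_eq_rpow, ← Real.sqrt_mul (by positivity)]
    congr 1
    field_simp
  rw [hsplit, Real.mul_rpow hb.le (by positivity), hbD,
    show -(r - 1 - 1) / 2 = -(r - 1) / 2 + 1 / 2 by ring, Real.rpow_add hb,
    show r - 1 - 1 = r - 2 by ring]
  have h1 : 0 < √(π / D⁻¹) := Real.sqrt_pos.2 (by have := pi_pos; positivity)
  have h2 : 0 < b ^ (1 / 2 : ℝ) := by positivity
  field_simp

section LinearAlgebra

variable {n : Type*} [Fintype n]

lemma isHermitian_dotProduct_mulVec_comm {T : Matrix n n ℝ} (hT : T.IsHermitian) (x y : n → ℝ) :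
    x ⬝ᵥ T *ᵥ y = y ⬝ᵥ T *ᵥ x := by
  rw [dotProduct_mulVec, ← mulVec_transpose, dotProduct_comm,
    ← conjTranspose_eq_transpose_of_trivial, hT.eq]

lemma dotProduct_inv_fromBlocks_mulVec [DecidableEq n] {S : Matrix n n ℝ} (hS : S.PosDef) (k : n → ℝ)
    {Δ : Matrix (Unit ⊕ n) (Unit ⊕ n) ℝ}
    (hΔdef : Δ =
      Matrix.fromBlocks (Matrix.of fun _ _ => (1 : ℝ)) (Matrix.of fun _ j => k j)
        (Matrix.of fun i _ => k i) S)
    (hΔ : Δ.PosDef) :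
    0 < 1 - k ⬝ᵥ S⁻¹ *ᵥ k ∧ ∀ (a : ℝ) (h : n → ℝ),
      (Sum.elim (fun _ => a) h) ⬝ᵥ Δ⁻¹ *ᵥ (Sum.elim (fun _ => a) h) =
        (a - k ⬝ᵥ S⁻¹ *ᵥ h) ^ 2 / (1 - k ⬝ᵥ S⁻¹ *ᵥ k) + h ⬝ᵥ S⁻¹ *ᵥ h := by
  have hSu : IsUnit S.det := hS.det_pos.ne'.isUnit
  have hΔu : IsUnit Δ.det := hΔ.det_pos.ne'.isUnit
  have hmul (a : ℝ) (h : n → ℝ) : Δ *ᵥ Sum.elim (fun _ => a) h =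
      Sum.elim (fun _ => a + k ⬝ᵥ h) (a • k + S *ᵥ h) := by
    rw [hΔdef, fromBlocks_mulVec]
    congr 1 <;> ext i <;> simp [mulVec, dotProduct, mul_comm]
  have hSS (x : n → ℝ) : S *ᵥ S⁻¹ *ᵥ x = x := by
    rw [mulVec_mulVec, mul_nonsing_inv _ hSu, one_mulVec]
  have hpos : 0 < 1 - k ⬝ᵥ S⁻¹ *ᵥ k := by
    have h := hΔ.dotProduct_mulVec_pos (x := Sum.elim (fun _ => 1) (-(S⁻¹ *ᵥ k)))
      (fun h => one_ne_zero (congrFun h (Sum.inl ())))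
    rw [hmul, star_trivial] at h
    simpa [mulVec_neg, hSS, ← sub_eq_add_neg] using h
  refine ⟨hpos, fun a h => ?_⟩
  set d := 1 - k ⬝ᵥ S⁻¹ *ᵥ k with hd
  set t := (a - k ⬝ᵥ S⁻¹ *ᵥ h) / d with ht
  have htd : t * d = a - k ⬝ᵥ S⁻¹ *ᵥ h := by rw [ht]; field_simp
  have hinv : Δ⁻¹ *ᵥ Sum.elim (fun _ => a) h =
      Sum.elim (fun _ => t) (S⁻¹ *ᵥ (h - t • k)) := by
    have : Sum.elim (fun _ => a) h = Δ *ᵥ Sum.elim (fun _ => t) (S⁻¹ *ᵥ (h - t • k)) := by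
      rw [hmul, hSS]
      congr 1
      · ext
        simp only [mulVec_sub, mulVec_smul, dotProduct_sub, dotProduct_smul, smul_eq_mul]
        linear_combination -htd + t * hd
      · simp
    rw [this, mulVec_mulVec, nonsing_inv_mul _ hΔu, one_mulVec]
  have hsymm : h ⬝ᵥ S⁻¹ *ᵥ k = k ⬝ᵥ S⁻¹ *ᵥ h :=
    isHermitian_dotProduct_mulVec_comm hS.inv.isHermitian h k
  rw [hinv, sumElim_dotProduct_sumElim]
  simp only [mulVec_sub, mulVec_smul, dotProduct_sub, dotProduct_smul, smul_eq_mul, hsymm]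
  have : (fun _ : Unit => a) ⬝ᵥ (fun _ => t) = a * t := by simp [dotProduct]
  rw [this, ← htd]
  field_simp
  linear_combination -t * htd

end LinearAlgebra

/-- Theorem 3 of the paper (univariate form): for the prior field `Y_x = U + V W_x` with `U`
uniform on `[−m, m]` and `V` uniform on `[ε, 1/ε]`, the conditional density `g_{m,ε}(z)` of
`Y_x` given the `n ≥ 3` observations `y`, along any sequences `m_j → ∞` and `ε_j → 0⁺`,
converges to the density of the univariate Student distribution with `n − 2` degrees of
freedom, location `μ + kᵀ Σ⁻¹ (y − μ𝟙)` and scale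
`√( (1/(n−2)) ((y − μ𝟙)ᵀ Σ⁻¹ y) (1 − kᵀ Σ⁻¹ k + (1 − 𝟙ᵀ Σ⁻¹ k)²/(𝟙ᵀ Σ⁻¹ 𝟙)) )`. -/
theorem gaussian_mixture_random_mean_variance_student_posterior
    (n : ℕ) (hn : 3 ≤ n)
    (S : Matrix (Fin n) (Fin n) ℝ) (hS : S.PosDef)
    (k : Fin n → ℝ)
    (Δ : Matrix (Unit ⊕ Fin n) (Unit ⊕ Fin n) ℝ)
    (hΔdef : Δ =
      Matrix.fromBlocks (Matrix.of fun _ _ => (1 : ℝ)) (Matrix.of fun _ j => k j)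
        (Matrix.of fun i _ => k i) S)
    (hΔ : Δ.PosDef)
    (y : Fin n → ℝ)
    (onen : Fin n → ℝ) (honen : onen = fun _ => (1 : ℝ))
    (hy : ¬ ∃ c : ℝ, y = c • onen)
    (one1 : Unit ⊕ Fin n → ℝ) (hone1 : one1 = fun _ => (1 : ℝ))
    (μ : ℝ) (hμ : μ = (onen ⬝ᵥ S⁻¹ *ᵥ y) / (onen ⬝ᵥ S⁻¹ *ᵥ onen))
    (s : ℝ)
    (hs : s = Real.sqrt ((1 / ((n : ℝ) - 2)) * ((y - μ • onen) ⬝ᵥ S⁻¹ *ᵥ y) *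
      (1 - k ⬝ᵥ S⁻¹ *ᵥ k + (1 - onen ⬝ᵥ S⁻¹ *ᵥ k) ^ 2 / (onen ⬝ᵥ S⁻¹ *ᵥ onen))))
    (g : ℝ → ℝ → ℝ → ℝ)
    (hg : ∀ m > (0 : ℝ), ∀ ε : ℝ, 0 < ε → ε < 1 → ∀ z : ℝ, g m ε z =
      (∫ u in (-m)..m, ∫ v in ε..(1 / ε),
          v ^ (-((n : ℝ) + 1)) *
            Real.exp (-(1 / (2 * v ^ 2)) *
              ((Sum.elim (fun _ => z) y - u • one1) ⬝ᵥ
                Δ⁻¹ *ᵥ (Sum.elim (fun _ => z) y - u • one1)))) /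
        (∫ z' : ℝ, ∫ u in (-m)..m, ∫ v in ε..(1 / ε),
          v ^ (-((n : ℝ) + 1)) *
            Real.exp (-(1 / (2 * v ^ 2)) *
              ((Sum.elim (fun _ => z') y - u • one1) ⬝ᵥ
                Δ⁻¹ *ᵥ (Sum.elim (fun _ => z') y - u • one1))))) :
    ∀ z : ℝ, ∀ mseq εseq : ℕ → ℝ,
      (∀ j, 0 < mseq j) → (∀ j, 0 < εseq j ∧ εseq j < 1) →
      Tendsto mseq atTop atTop →
      Tendsto εseq atTop (nhdsWithin 0 (Set.Ioi 0)) →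
      Tendsto (fun j => g (mseq j) (εseq j) z) atTop
        (nhds
          (Real.Gamma ((((n : ℝ) - 2) + 1) / 2) /
              (Real.Gamma (((n : ℝ) - 2) / 2) * Real.sqrt (π * ((n : ℝ) - 2)) * s) *
            (1 + ((z - (μ + k ⬝ᵥ S⁻¹ *ᵥ (y - μ • onen))) / s) ^ 2 / ((n : ℝ) - 2)) ^
              (-(((n : ℝ) - 2) + 1) / 2))) := by
  intro z mseq εseq hm0 hε0 hm hε
  obtain ⟨hδ, hquad⟩ := dotProduct_inv_fromBlocks_mulVec hS k hΔdef hΔ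
  have hn' : (0 : ℝ) < n - 2 := by
    have : (3 : ℝ) ≤ n := by exact_mod_cast hn
    linarith
  have hsymm := isHermitian_dotProduct_mulVec_comm hS.inv.isHermitian
  have hpos (x : Fin n → ℝ) (hx : x ≠ 0) : 0 < x ⬝ᵥ S⁻¹ *ᵥ x := hS.inv.dotProduct_mulVec_pos hx
  have hc : 0 < onen ⬝ᵥ S⁻¹ *ᵥ onen := by
    refine hpos _ fun h => one_ne_zero (α := ℝ) ?_
    simpa [honen] using congrFun h ⟨0, by omega⟩
  have hμc : onen ⬝ᵥ S⁻¹ *ᵥ y = μ * (onen ⬝ᵥ S⁻¹ *ᵥ onen) := by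
    rw [hμ]
    field_simp
  have hb : 0 < (y - μ • onen) ⬝ᵥ S⁻¹ *ᵥ y := by
    have h := hpos (y - μ • onen) fun h => hy ⟨μ, sub_eq_zero.1 h⟩
    simp only [mulVec_sub, mulVec_smul, sub_dotProduct, smul_dotProduct, dotProduct_sub,
      dotProduct_smul, smul_eq_mul, hsymm y onen, hμc] at h ⊢
    linarith
  set δ := 1 - k ⬝ᵥ S⁻¹ *ᵥ k
  set e := 1 - onen ⬝ᵥ S⁻¹ *ᵥ k with he
  set c := onen ⬝ᵥ S⁻¹ *ᵥ onen with hcdef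
  set b := (y - μ • onen) ⬝ᵥ S⁻¹ *ᵥ y with hbdef
  set l := μ + k ⬝ᵥ S⁻¹ *ᵥ (y - μ • onen) with hl
  have hD : 0 < δ + e ^ 2 / c := by positivity
  have hA : 0 < e ^ 2 / δ + c := by positivity
  let center : ℝ → ℝ := fun z => μ + e / δ / (e ^ 2 / δ + c) * (z - l)
  have hq (z u : ℝ) : (Sum.elim (fun _ => z) y - u • one1) ⬝ᵥ
      Δ⁻¹ *ᵥ (Sum.elim (fun _ => z) y - u • one1) =
      (e ^ 2 / δ + c) * (u - center z) ^ 2 + ((δ + e ^ 2 / c)⁻¹ * (z - l) ^ 2 + b) := by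
    have helim : Sum.elim (fun _ => z) y - u • one1 =
        Sum.elim (fun _ : Unit => z - u) (y - u • onen) := by
      ext (i | i) <;> simp [hone1, honen]
    have hres : z - u - k ⬝ᵥ S⁻¹ *ᵥ (y - u • onen) = (z - l) - e * (u - μ) := by
      simp only [hl, he, mulVec_sub, mulVec_smul, dotProduct_sub, dotProduct_smul, smul_eq_mul,
        hsymm onen k]
      ring
    have hgls : (y - u • onen) ⬝ᵥ S⁻¹ *ᵥ (y - u • onen) = c * (u - μ) ^ 2 + b := by
      simp only [hbdef, mulVec_sub, mulVec_smul, sub_dotProduct, smul_dotProduct, dotProduct_sub,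
        dotProduct_smul, smul_eq_mul, hsymm y onen, hμc, ← hcdef]
      ring
    rw [helim, hquad, hres, hgls]
    have hne : e ^ 2 + δ * c ≠ 0 := by positivity
    have hne' : e ^ 2 + c * δ ≠ 0 := by positivity
    have hne'' : δ * c + e ^ 2 ≠ 0 := by positivity
    simp only [center]
    field_simp
    ring
  have hqm : Measurable (Function.uncurry fun z u : ℝ =>
      (Sum.elim (fun _ => z) y - u • one1) ⬝ᵥ
        Δ⁻¹ *ᵥ (Sum.elim (fun _ => z) y - u • one1)) := by
    simp_rw [hq, center]
    fun_prop
  have hlim := tendsto_gaussian_mixture_posterior (r := n) (by linarith) hA hD hb hqm hq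
    hm0 hε0 hm hε z
  have hs2 : s ^ 2 * ((n : ℝ) - 2) = b * (δ + e ^ 2 / c) := by
    rw [hs, Real.sq_sqrt (by positivity)]
    field_simp
  have hs0 : 0 ≤ s := hs ▸ Real.sqrt_nonneg _
  have hsqrt : √(π * (b * (δ + e ^ 2 / c))) = √(π * ((n : ℝ) - 2)) * s := by
    rw [← hs2, show π * (s ^ 2 * ((n : ℝ) - 2)) = π * ((n : ℝ) - 2) * s ^ 2 by ring,
      Real.sqrt_mul (by have := pi_pos; positivity), Real.sqrt_sq hs0]
  rw [hsqrt, ← mul_assoc, ← hs2, ← div_div ((z - l) ^ 2), ← div_pow] at hlim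
  rw [show (n : ℝ) - 2 + 1 = n - 1 by ring]
  exact hlim.congr fun j => (hg _ (hm0 j) _ (hε0 j).1 (hε0 j).2 z).symm
end

section
/- Let η be the uniform (Lebesgue) probability measure on [0,1], so that its cumulative distribution function K is the identity. Then for every probability measure m on [0,1], the operator L_η preserves the first moment: ∫₀¹ t dm'(t) = ∫₀¹ t dm(t), where m' := L_η(m). -/
open MeasureTheory Set

/-- The tail distribution `F_m(α) := m((α,1])` of a probability measure `m` on `[0,1]`. -/
noncomputable def tailDist (m : Measure ℝ) (α : ℝ) : ℝ := (m (Set.Ioc α 1)).toReal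

/-- The generalized inverse `S⁻¹(t) := sup {α ∈ [0,1] : S(α) > t}` (with `sup ∅ := 0`). -/
noncomputable def genInv (S : ℝ → ℝ) (t : ℝ) : ℝ :=
  sSup {α ∈ Set.Icc (0 : ℝ) 1 | t < S α}

/-- Layer cake formula for a function with values in `[0,1]`. -/
theorem integral_eq_setIntegral_Ioc_meas_lt {μ : Measure ℝ} [IsFiniteMeasure μ] {f : ℝ → ℝ}
    (hf : Measurable f) (h0 : ∀ᵐ x ∂μ, 0 ≤ f x) (h1 : ∀ᵐ x ∂μ, f x ≤ 1) :
    ∫ x, f x ∂μ = ∫ t in Ioc (0 : ℝ) 1, μ.real {x | t < f x} := by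
  have hint : Integrable f μ := by
    refine Integrable.of_bound hf.aestronglyMeasurable 1 ?_
    filter_upwards [h0, h1] with x hx0 hx1
    rwa [Real.norm_of_nonneg hx0]
  rw [hint.integral_eq_integral_meas_lt h0]
  refine setIntegral_eq_of_subset_of_forall_sdiff_eq_zero measurableSet_Ioi Ioc_subset_Ioi_self ?_
  rintro t ⟨ht0, ht⟩
  have ht1 : 1 < t := by
    by_contra! h
    exact ht ⟨ht0, h⟩
  have : μ {x | t < f x} = 0 := by
    refine measure_mono_null (fun x hx => ?_) (ae_iff.mp h1)
    exact not_le.mpr (ht1.trans hx)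
  simp [Measure.real, this]

theorem tailDist_nonneg (m : Measure ℝ) (α : ℝ) : 0 ≤ tailDist m α := ENNReal.toReal_nonneg

theorem tailDist_le_one (m : Measure ℝ) [IsProbabilityMeasure m] (α : ℝ) : tailDist m α ≤ 1 :=
  measureReal_le_one

theorem antitone_tailDist (m : Measure ℝ) [IsFiniteMeasure m] : Antitone (tailDist m) :=
  fun _ _ h => measureReal_mono (Ioc_subset_Ioc_left h)

/-- The first moment is the integral of the tail distribution. -/
theorem setIntegral_Icc_eq_setIntegral_tailDist (m : Measure ℝ) [IsFiniteMeasure m] :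
    ∫ t in Icc (0 : ℝ) 1, t ∂m = ∫ t in Ioc (0 : ℝ) 1, tailDist m t := by
  have hmem : ∀ᵐ x ∂m.restrict (Icc (0 : ℝ) 1), x ∈ Icc (0 : ℝ) 1 :=
    ae_restrict_mem measurableSet_Icc
  rw [integral_eq_setIntegral_Ioc_meas_lt measurable_id' (hmem.mono fun _ h => h.1)
    (hmem.mono fun _ h => h.2)]
  refine setIntegral_congr_fun measurableSet_Ioc fun t ht => ?_
  have hset : {x | t < x} ∩ Icc (0 : ℝ) 1 = Ioc t 1 := by
    ext x
    exact ⟨fun h => ⟨h.1, h.2.2⟩, fun h => ⟨h.1, (ht.1.trans h.1).le, h.2⟩⟩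
  simp only [Measure.real, tailDist]
  rw [Measure.restrict_apply (measurableSet_lt measurable_const measurable_id'), hset]

theorem genInv_mem_Icc (S : ℝ → ℝ) (t : ℝ) : genInv S t ∈ Icc (0 : ℝ) 1 :=
  ⟨Real.sSup_nonneg fun _ h => h.1.1, Real.sSup_le (fun _ h => h.1.2) zero_le_one⟩

/-- The generalized inverse of a decreasing function is the length of its superlevel set. -/
theorem volume_superlevel_eq_genInv {S : ℝ → ℝ} (hS : Antitone S) (t : ℝ) :
    volume {α ∈ Icc (0 : ℝ) 1 | t < S α} = ENNReal.ofReal (genInv S t) := by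
  have hbdd : BddAbove {α ∈ Icc (0 : ℝ) 1 | t < S α} := ⟨1, fun _ h => h.1.2⟩
  apply le_antisymm
  · have hsub : {α ∈ Icc (0 : ℝ) 1 | t < S α} ⊆ Icc 0 (genInv S t) :=
      fun α h => ⟨h.1.1, le_csSup hbdd h⟩
    simpa using measure_mono (μ := volume) hsub
  · rcases eq_empty_or_nonempty {α ∈ Icc (0 : ℝ) 1 | t < S α} with he | hne
    · rw [genInv, he]
      simp
    · have hsub : Ico 0 (genInv S t) ⊆ {α ∈ Icc (0 : ℝ) 1 | t < S α} := by
        intro α hα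
        obtain ⟨β, hβ, hαβ⟩ := exists_lt_of_lt_csSup hne hα.2
        exact ⟨⟨hα.1, hαβ.le.trans hβ.1.2⟩, hβ.2.trans_le (hS hαβ.le)⟩
      simpa using measure_mono (μ := volume) hsub

/-- A decreasing function with values in `[0,1]` and its generalized inverse have the same
integral over `[0,1]`. -/
theorem setIntegral_genInv {S : ℝ → ℝ} (hS : Antitone S) (h0 : ∀ α, 0 ≤ S α)
    (h1 : ∀ α, S α ≤ 1) :
    ∫ t in Ioc (0 : ℝ) 1, genInv S t = ∫ α in Ioc (0 : ℝ) 1, S α := by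
  rw [← integral_Icc_eq_integral_Ioc (f := S),
    integral_eq_setIntegral_Ioc_meas_lt hS.measurable (ae_of_all _ h0) (ae_of_all _ h1)]
  refine setIntegral_congr_fun measurableSet_Ioc fun t _ => ?_
  have hset : {α | t < S α} ∩ Icc (0 : ℝ) 1 = {α ∈ Icc (0 : ℝ) 1 | t < S α} := inter_comm _ _
  simp only [Measure.real]
  rw [Measure.restrict_apply (measurableSet_lt measurable_const hS.measurable), hset,
    volume_superlevel_eq_genInv hS, ENNReal.toReal_ofReal (genInv_mem_Icc S t).1]

/-- The cumulative distribution function of the uniform measure is the identity on `[0,1]`. -/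
theorem uniform_Icc_toReal {u : ℝ} (hu : u ∈ Icc (0 : ℝ) 1) :
    ((volume.restrict (Icc (0 : ℝ) 1)) (Icc (0 : ℝ) u)).toReal = u := by
  rw [Measure.restrict_apply measurableSet_Icc,
    inter_eq_left.mpr (Icc_subset_Icc_right hu.2), Real.volume_Icc, sub_zero,
    ENNReal.toReal_ofReal hu.1]

/-- When `η` is the uniform (Lebesgue) probability measure on `[0,1]`, with cumulative
distribution function `K`, the operator `L_η` (which maps `m` to the probability measure `m'`
on `[0,1]` with tail distribution `K ∘ F_m⁻¹`) preserves the first moment: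
`∫₀¹ t dm'(t) = ∫₀¹ t dm(t)`. -/
theorem uniform_eta_preserves_first_moment
    (η : Measure ℝ) (hη : η = volume.restrict (Set.Icc (0 : ℝ) 1))
    (K : ℝ → ℝ) (hK : K = fun u => (η (Set.Icc (0 : ℝ) u)).toReal)
    (m : Measure ℝ) (hm : IsProbabilityMeasure m) (hmsupp : m (Set.Icc (0 : ℝ) 1)ᶜ = 0)
    (m' : Measure ℝ) (hm' : IsProbabilityMeasure m') (hm'supp : m' (Set.Icc (0 : ℝ) 1)ᶜ = 0)
    (htail : ∀ t ∈ Set.Icc (0 : ℝ) 1, tailDist m' t = K (genInv (tailDist m) t)) :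
    ∫ t in Set.Icc (0 : ℝ) 1, t ∂m' = ∫ t in Set.Icc (0 : ℝ) 1, t ∂m := by
  subst hη hK
  rw [setIntegral_Icc_eq_setIntegral_tailDist m', setIntegral_Icc_eq_setIntegral_tailDist m,
    ← setIntegral_genInv (antitone_tailDist m) (tailDist_nonneg m) (tailDist_le_one m)]
  refine setIntegral_congr_fun measurableSet_Ioc fun t ht => ?_
  rw [htail t (Ioc_subset_Icc_self ht)]
  exact uniform_Icc_toReal (genInv_mem_Icc _ t)
end

section
/- Let r, n ≥ 1, let Δ be an (n+r)×(n+r) real positive definite matrix, let y ∈ ℝ^n, and let 𝟙 denote the all-ones vector in ℝ^{n+r}. For m > 0 and z ∈ ℝ^r define g_m(z) := [∫_{−m}^{m} exp(−½ ((z, y) − u𝟙)ᵀ Δ⁻¹ ((z, y) − u𝟙)) du] / [∫_{ℝ^r} ∫_{−m}^{m} exp(−½ ((z', y) − u𝟙)ᵀ Δ⁻¹ ((z', y) − u𝟙)) du dz'], where (z, y) ∈ ℝ^{n+r} is the concatenated vector. Then for every z ∈ ℝ^r, as m → ∞, g_m(z) converges to exp(−½ ( (z,y)ᵀ Δ⁻¹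 (z,y) − (𝟙ᵀ Δ⁻¹ (z,y))² / (𝟙ᵀ Δ⁻¹ 𝟙) )) / ∫_{ℝ^r} exp(−½ ( (z',y)ᵀ Δ⁻¹ (z',y) − (𝟙ᵀ Δ⁻¹ (z',y))² / (𝟙ᵀ Δ⁻¹ 𝟙) )) dz'. -/
open Matrix MeasureTheory Real Filter

/-- Cauchy–Schwarz bound for a coordinate against the quadratic form of the inverse matrix. -/
lemma Matrix.PosDef.sq_apply_le {ι : Type*} [Fintype ι] [DecidableEq ι] {Δ : Matrix ι ι ℝ}
    (hΔ : Δ.PosDef) (x : ι → ℝ) (i : ι) :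
    x i ^ 2 ≤ Δ i i * (x ⬝ᵥ Δ⁻¹ *ᵥ x) := by
  have hd : 0 < Δ i i := hΔ.diag_pos
  have hT : Δᵀ = Δ := by simpa using hΔ.isHermitian.eq
  have hmul : Δ⁻¹ *ᵥ (Δ *ᵥ Pi.single i 1) = Pi.single i 1 := by
    rw [mulVec_mulVec, nonsing_inv_mul _ ((isUnit_iff_isUnit_det _).1 hΔ.isUnit), one_mulVec]
  have hcross : (Δ *ᵥ Pi.single i 1) ⬝ᵥ (Δ⁻¹ *ᵥ x) = x i := by
    rw [dotProduct_comm, dotProduct_mulVec, ← mulVec_transpose, hT, mulVec_mulVec,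
      mul_nonsing_inv _ ((isUnit_iff_isUnit_det _).1 hΔ.isUnit), one_mulVec]
    simp
  have hpos := hΔ.inv.posSemidef.dotProduct_mulVec_nonneg
    (x - (x i / Δ i i) • (Δ *ᵥ Pi.single i 1))
  simp only [star_trivial, mulVec_sub, mulVec_smul, hmul, sub_dotProduct, dotProduct_sub,
    smul_dotProduct, dotProduct_smul, hcross, smul_eq_mul] at hpos
  simp only [dotProduct_single, mulVec_single, mul_one, MulOpposite.op_one, one_smul,
    col_apply] at hpos
  have h : x i / Δ i i * Δ i i = x i := div_mul_cancel₀ _ hd.ne'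
  rw [h] at hpos
  have h2 : x i / Δ i i * x i ≤ x ⬝ᵥ Δ⁻¹ *ᵥ x := by linarith
  calc x i ^ 2 = Δ i i * (x i / Δ i i * x i) := by field_simp
    _ ≤ _ := by gcongr

/-- Completing the square in the direction `v` for a symmetric matrix. -/
lemma Matrix.dotProduct_mulVec_sub_smul_eq {ι : Type*} [Fintype ι] {A : Matrix ι ι ℝ}
    (hA : Aᵀ = A) (w v : ι → ℝ) (hv : v ⬝ᵥ A *ᵥ v ≠ 0) (u : ℝ) :
    (w - u • v) ⬝ᵥ A *ᵥ (w - u • v) =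
      ((w ⬝ᵥ A *ᵥ w) - (v ⬝ᵥ A *ᵥ w) ^ 2 / (v ⬝ᵥ A *ᵥ v)) +
        (v ⬝ᵥ A *ᵥ v) * (u - (v ⬝ᵥ A *ᵥ w) / (v ⬝ᵥ A *ᵥ v)) ^ 2 := by
  have hsymm : w ⬝ᵥ A *ᵥ v = v ⬝ᵥ A *ᵥ w := by
    rw [dotProduct_mulVec, ← mulVec_transpose, hA, dotProduct_comm]
  simp only [mulVec_sub, mulVec_smul, sub_dotProduct, dotProduct_sub, smul_dotProduct,
    dotProduct_smul, smul_eq_mul, hsymm]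
  field_simp
  ring

@[fun_prop]
lemma Continuous.sumElim_const {X ι κ : Type*} [TopologicalSpace X] {f : X → ι → ℝ}
    (hf : Continuous f) (y : κ → ℝ) : Continuous fun x => Sum.elim (f x) y := by
  refine continuous_pi ?_
  rintro (i | j)
  · exact (continuous_apply i).comp hf
  · exact continuous_const

/-- The shifted product Gaussian is integrable. -/
lemma integrable_exp_neg_mul_sum_sub_sq {ι : Type*} [Fintype ι] {c : ℝ} (hc : 0 < c) (t : ℝ) :
    Integrable fun z : ι → ℝ => exp (-c * ∑ i, (z i - t) ^ 2) := by
  have h : Integrable fun z : ι → ℝ => ∏ i, exp (-c * (z i - t) ^ 2) :=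
    Integrable.fintype_prod fun _ => (integrable_exp_neg_mul_sq hc).comp_sub_right t
  simpa only [← exp_sum, ← Finset.mul_sum] using h

/-- The density obtained by integrating a Gaussian density over translations along the all-ones
vector is integrable in the remaining coordinates once at least one coordinate is fixed. -/
lemma integrable_exp_projected_quadratic {ι κ : Type*} [Fintype ι] [Nonempty ι] [DecidableEq ι]
    [Fintype κ] [DecidableEq κ] {Δ : Matrix (ι ⊕ κ) (ι ⊕ κ) ℝ} (hΔ : Δ.PosDef) (y : κ → ℝ) (j : κ) :
    Integrable fun z : ι → ℝ => exp (-(1 / 2) *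
      ((Sum.elim z y ⬝ᵥ Δ⁻¹ *ᵥ Sum.elim z y) -
        ((fun _ => 1) ⬝ᵥ Δ⁻¹ *ᵥ Sum.elim z y) ^ 2 / ((fun _ => 1) ⬝ᵥ Δ⁻¹ *ᵥ (fun _ => 1)))) := by
  have hT : (Δ⁻¹)ᵀ = Δ⁻¹ := by simpa using hΔ.inv.isHermitian.eq
  have ha : 0 < (fun _ => (1 : ℝ)) ⬝ᵥ Δ⁻¹ *ᵥ (fun _ => 1) := by
    simpa using hΔ.inv.dotProduct_mulVec_pos (x := fun _ => (1 : ℝ))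
      (fun h => one_ne_zero (congrFun h (Sum.inr j)))
  set D := ∑ i : ι, 2 * (Δ (Sum.inl i) (Sum.inl i) + Δ (Sum.inr j) (Sum.inr j)) with hD
  have hDpos : 0 < D := Finset.sum_pos
    (fun i _ => mul_pos two_pos (add_pos hΔ.diag_pos hΔ.diag_pos)) Finset.univ_nonempty
  refine (integrable_exp_neg_mul_sum_sub_sq (c := 1 / (2 * D)) (by positivity) (y j)).mono'
    (Continuous.aestronglyMeasurable (by fun_prop)) (.of_forall fun z => ?_)
  rw [norm_of_nonneg (exp_pos _).le, exp_le_exp]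
  set q := (Sum.elim z y ⬝ᵥ Δ⁻¹ *ᵥ Sum.elim z y) -
    ((fun _ => 1) ⬝ᵥ Δ⁻¹ *ᵥ Sum.elim z y) ^ 2 / ((fun _ => 1) ⬝ᵥ Δ⁻¹ *ᵥ (fun _ => 1)) with hq
  obtain ⟨u, hu⟩ : ∃ u : ℝ, (Sum.elim z y - u • (fun _ => (1 : ℝ))) ⬝ᵥ
      Δ⁻¹ *ᵥ (Sum.elim z y - u • (fun _ => (1 : ℝ))) = q := by
    refine ⟨((fun _ => 1) ⬝ᵥ Δ⁻¹ *ᵥ Sum.elim z y) / ((fun _ => 1) ⬝ᵥ Δ⁻¹ *ᵥ (fun _ => 1)),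
      (dotProduct_mulVec_sub_smul_eq hT _ _ ha.ne' _).trans ?_⟩
    rw [sub_self, hq]
    ring
  have hbound : ∑ i, (z i - y j) ^ 2 ≤ D * q := by
    rw [hD, Finset.sum_mul]
    refine Finset.sum_le_sum fun i _ => ?_
    have h₁ := hΔ.sq_apply_le (Sum.elim z y - u • (fun _ => (1 : ℝ))) (Sum.inl i)
    have h₂ := hΔ.sq_apply_le (Sum.elim z y - u • (fun _ => (1 : ℝ))) (Sum.inr j)
    rw [hu] at h₁ h₂
    simp only [Pi.sub_apply, Pi.smul_apply, Sum.elim_inl, Sum.elim_inr, smul_eq_mul,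
      mul_one] at h₁ h₂
    nlinarith [sq_nonneg ((z i - u) + (y j - u))]
  have : 1 / (2 * D) * ∑ i, (z i - y j) ^ 2 ≤ 1 / (2 * D) * (D * q) := by gcongr
  have h : 1 / (2 * D) * (D * q) = 1 / 2 * q := by field_simp
  linarith

/-- Limit of the conditional density of the random field `Y_x = U + W_x` with `U` uniform on
`[−m, m]`: as `m → ∞`, the conditional density `g_m(z)` of the field at `r` prediction points
given `n` observations `y` converges, for every `z ∈ ℝ^r`, to the stated Gaussian-type
expression. -/
theorem uniform_mean_mixture_conditional_density_limit
    (r n : ℕ) (hr : 1 ≤ r) (hn : 1 ≤ n)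
    (Δ : Matrix (Fin r ⊕ Fin n) (Fin r ⊕ Fin n) ℝ) (hΔ : Δ.PosDef)
    (y : Fin n → ℝ)
    (one : Fin r ⊕ Fin n → ℝ) (hone : one = fun _ => (1 : ℝ))
    (g : ℝ → (Fin r → ℝ) → ℝ)
    (hg : ∀ m > (0 : ℝ), ∀ z : Fin r → ℝ, g m z =
      (∫ u in (-m)..m,
          Real.exp (-(1 / 2) *
            ((Sum.elim z y - u • one) ⬝ᵥ Δ⁻¹ *ᵥ (Sum.elim z y - u • one)))) /
        (∫ z' : Fin r → ℝ, ∫ u in (-m)..m,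
          Real.exp (-(1 / 2) *
            ((Sum.elim z' y - u • one) ⬝ᵥ Δ⁻¹ *ᵥ (Sum.elim z' y - u • one))))) :
    ∀ z : Fin r → ℝ,
      Tendsto (fun m : ℝ => g m z) atTop
        (nhds
          (Real.exp (-(1 / 2) *
              ((Sum.elim z y ⬝ᵥ Δ⁻¹ *ᵥ Sum.elim z y) -
                (one ⬝ᵥ Δ⁻¹ *ᵥ Sum.elim z y) ^ 2 / (one ⬝ᵥ Δ⁻¹ *ᵥ one))) /
            ∫ z' : Fin r → ℝ,
              Real.exp (-(1 / 2) *
                ((Sum.elim z' y ⬝ᵥ Δ⁻¹ *ᵥ Sum.elim z' y) -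
                  (one ⬝ᵥ Δ⁻¹ *ᵥ Sum.elim z' y) ^ 2 / (one ⬝ᵥ Δ⁻¹ *ᵥ one))))) := by
  intro z
  subst hone
  have : Nonempty (Fin r) := ⟨⟨0, hr⟩⟩
  have hT : (Δ⁻¹)ᵀ = Δ⁻¹ := by simpa using hΔ.inv.isHermitian.eq
  have hint := integrable_exp_projected_quadratic hΔ y ⟨0, hn⟩
  set a := (fun _ => (1 : ℝ)) ⬝ᵥ Δ⁻¹ *ᵥ (fun _ => 1) with ha_def
  have ha : 0 < a := by
    simpa using hΔ.inv.dotProduct_mulVec_pos (x := fun _ => (1 : ℝ))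
      (fun h => one_ne_zero (congrFun h (Sum.inr ⟨0, hn⟩)))
  set E : (Fin r → ℝ) → ℝ := fun z => exp (-(1 / 2) *
    ((Sum.elim z y ⬝ᵥ Δ⁻¹ *ᵥ Sum.elim z y) -
      ((fun _ => 1) ⬝ᵥ Δ⁻¹ *ᵥ Sum.elim z y) ^ 2 / a)) with hE
  set F : ℝ → (Fin r → ℝ) → ℝ := fun m z => ∫ u in (-m)..m,
    exp (-(1 / 2) * ((Sum.elim z y - u • (fun _ => (1 : ℝ))) ⬝ᵥ
      Δ⁻¹ *ᵥ (Sum.elim z y - u • (fun _ => (1 : ℝ))))) with hF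
  set C := ∫ u : ℝ, exp (-(a / 2) * u ^ 2) with hC
  have hCpos : 0 < C := by
    rw [hC, integral_gaussian]
    positivity
  let b : (Fin r → ℝ) → ℝ := fun z => ((fun _ => 1) ⬝ᵥ Δ⁻¹ *ᵥ Sum.elim z y) / a
  have hgauss (t : ℝ) : Integrable fun u : ℝ => exp (-(a / 2) * (u - t) ^ 2) :=
    (integrable_exp_neg_mul_sq (half_pos ha)).comp_sub_right t
  have hgaussC (t : ℝ) : ∫ u : ℝ, exp (-(a / 2) * (u - t) ^ 2) = C :=
    integral_sub_right_eq_self (fun u : ℝ => exp (-(a / 2) * u ^ 2)) t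
  have hF_eq (m : ℝ) (z : Fin r → ℝ) :
      F m z = E z * ∫ u in (-m)..m, exp (-(a / 2) * (u - b z) ^ 2) := by
    simp only [hF, hE]
    rw [← intervalIntegral.integral_const_mul]
    refine intervalIntegral.integral_congr fun u _ => ?_
    simp only [dotProduct_mulVec_sub_smul_eq hT _ _ ha.ne', ← exp_add, b, ← ha_def]
    congr 1
    ring
  have hF_tendsto (z : Fin r → ℝ) : Tendsto (fun m => F m z) atTop (nhds (E z * C)) := by
    simp only [hF_eq, ← hgaussC (b z)]
    exact (intervalIntegral_tendsto_integral (hgauss _) tendsto_neg_atTop_atBot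
      tendsto_id).const_mul _
  have hF_meas (m : ℝ) : AEStronglyMeasurable (F m) := by
    refine Continuous.aestronglyMeasurable ?_
    refine intervalIntegral.continuous_parametric_intervalIntegral_of_continuous' ?_ _ _
    fun_prop
  have hF_le : ∀ᶠ m : ℝ in atTop, ∀ᵐ z : Fin r → ℝ, ‖F m z‖ ≤ E z * C := by
    filter_upwards [eventually_ge_atTop (0 : ℝ)] with m hm
    refine .of_forall fun z => ?_
    have hEpos : 0 < E z := exp_pos _
    rw [hF_eq, norm_mul, norm_of_nonneg hEpos.le, intervalIntegral.integral_of_le (by linarith),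
      norm_of_nonneg (integral_nonneg fun _ => (exp_pos _).le), ← hgaussC (b z)]
    exact mul_le_mul_of_nonneg_left (setIntegral_le_integral (hgauss _)
      (.of_forall fun _ => (exp_pos _).le)) hEpos.le
  have hden : Tendsto (fun m => ∫ z, F m z) atTop (nhds ((∫ z, E z) * C)) := by
    rw [← integral_mul_const]
    exact tendsto_integral_filter_of_dominated_convergence _ (.of_forall hF_meas) hF_le
      (hint.mul_const C) (.of_forall hF_tendsto)
  have hEpos : 0 < ∫ z, E z := integral_exp_pos hint
  have hlim := (hF_tendsto z).div hden (mul_pos hEpos hCpos).ne'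
  rw [mul_div_mul_right _ _ hCpos.ne'] at hlim
  refine hlim.congr' ?_
  filter_upwards [eventually_gt_atTop (0 : ℝ)] with m hm
  exact (hg m hm z).symm
end
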